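/- Let n ≥ 2, let x₀ ∈ ℝⁿ, R > 0, and let B = B_R(x₀) be the closed ball of radius R centred at x₀, with open interior B°. Let F : ℝ → ℝ be C² with F(0) = 0 and F'(μ) ≥ 0 for all μ ∈ ℝ, and suppose there exist δ, ε > 0 with |F(μ)| ≥ δ|μ|^{1+ε} for all μ ∈ ℝ. Then there exists a constant C > 0 such that every function u : B → ℝ that is continuous on B, twice continuously differentiable on B°, and satisfies −Δu(x) + F(u(x)) = 0 for all x ∈ B°, obeys |u(x₀)| ≤ C. In particular C is independent of the boundary values of u. -/

import Mathlib

/-!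
The proof is the Keller–Osserman argument: a comparison with a barrier that blows up on the sphere.

With `ρ x = R² - ‖x - x₀‖²` and `k = 2 / ε`, the function `w = A ρ ^ (-k)` satisfies
`Δw ≤ A (2kn + 4k(k+1)) R² ρ ^ (-k-2)`, while `w ^ (1+ε) = A ^ (1+ε) ρ ^ (-k-2)` by the choice of `k`.
Hence `Δw ≤ δ w ^ (1+ε)` as soon as `δ A ^ ε = (2kn + 4k(k+1)) R²`, and this choice of `A` depends
neither on `u` nor on its boundary values. If `u x₀ > w x₀`, then `u - w` has a positive interior
maximum, because `u` is bounded and `w` is infinite on the boundary; there `Δu ≤ Δw`, yet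
`Δu = F u ≥ δ u ^ (1+ε) > δ w ^ (1+ε) ≥ Δw`, a contradiction. So `u x₀ ≤ w x₀ = A R ^ (-2k)`
(`upper_bound`), and the lower bound is the same statement for `-u` and `μ ↦ -F (-μ)`.
-/

open Set Metric

/-- The Euclidean Laplacian `Δu(x) = ∑ i, ∂²u/∂xᵢ²(x)`. -/
noncomputable def lap {n : ℕ} (u : EuclideanSpace ℝ (Fin n) → ℝ)
    (x : EuclideanSpace ℝ (Fin n)) : ℝ :=
  ∑ i : Fin n,
    fderiv ℝ (fun y => fderiv ℝ u y (EuclideanSpace.single i 1)) x (EuclideanSpace.single i 1)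

/-- Second-order necessary condition at a local maximum. It follows from the sufficient condition
for a minimum: a point that is both a local maximum and a local minimum has vanishing second
derivative. -/
lemma second_deriv_nonpos {h h' : ℝ → ℝ} {c : ℝ} (hmax : IsLocalMax h 0)
    (hd : ∀ᶠ t in nhds 0, HasDerivAt h (h' t) t) (hd2 : HasDerivAt h' c 0) : c ≤ 0 := by
  by_contra! hc
  have he : deriv h =ᶠ[nhds 0] h' := hd.mono fun t ht => ht.deriv
  have h2 : deriv (deriv h) 0 = c := by rw [he.deriv_eq]; exact hd2.deriv
  have hmin : IsLocalMin h 0 :=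
    isLocalMin_of_deriv_deriv_pos (by rw [h2]; exact hc) hmax.deriv_eq_zero
      hd.self_of_nhds.continuousAt
  have hconst : h =ᶠ[nhds 0] fun _ => h 0 := by
    filter_upwards [hmax, hmin] with t h1 h2
    exact le_antisymm h1 h2
  have h3 : deriv h =ᶠ[nhds 0] fun _ => 0 := by
    have := hconst.deriv
    simpa using this
  have h4 := h3.deriv_eq
  rw [h2] at h4
  simp at h4
  linarith

/-- The restriction of a `C²` function to a line has the expected first and second derivatives. -/
lemma line_deriv {n : ℕ} {u : EuclideanSpace ℝ (Fin n) → ℝ} {x e : EuclideanSpace ℝ (Fin n)}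
    (hu : ContDiffAt ℝ 2 u x) :
    (∀ᶠ t in nhds (0 : ℝ), HasDerivAt (fun t : ℝ => u (x + t • e)) (fderiv ℝ u (x + t • e) e) t) ∧
    HasDerivAt (fun t : ℝ => fderiv ℝ u (x + t • e) e)
      (fderiv ℝ (fun y => fderiv ℝ u y e) x e) 0 := by
  have hl : ∀ t : ℝ, HasDerivAt (fun t : ℝ => x + t • e) e t := fun t => by
    simpa using ((hasDerivAt_id t).smul_const e).const_add x
  constructor
  · have hev : ∀ᶠ y in nhds x, DifferentiableAt ℝ u y :=
      (hu.eventually (by simp)).mono fun y hy => hy.differentiableAt (by simp)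
    have ht : Filter.Tendsto (fun t : ℝ => x + t • e) (nhds 0) (nhds x) := by
      have := (hl 0).continuousAt.tendsto
      simpa using this
    filter_upwards [ht.eventually hev] with t h
    exact h.hasFDerivAt.comp_hasDerivAt t (hl t)
  · have h1 : DifferentiableAt ℝ (fun y => fderiv ℝ u y e) x :=
      ((hu.fderiv_right (m := 1) (by norm_num)).differentiableAt (by simp)).clm_apply
        (differentiableAt_const e)
    have h2 : HasFDerivAt (fun y => fderiv ℝ u y e) (fderiv ℝ (fun y => fderiv ℝ u y e) x)
        (x + (0 : ℝ) • e) := by simpa using h1.hasFDerivAt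
    exact h2.comp_hasDerivAt 0 (hl 0)

/-- First and second derivatives of the barrier along a coordinate line; there `ρ` restricts to the
quadratic `p - 2at - t²`, where `a` is a coordinate of `x - x₀`. -/
lemma barrier_deriv {p a A k : ℝ} (hp : 0 < p) :
    (∀ᶠ t in nhds (0 : ℝ), HasDerivAt (fun t : ℝ => A * (p - 2 * a * t - t ^ 2) ^ (-k))
      (A * k * ((2 * a + 2 * t) * (p - 2 * a * t - t ^ 2) ^ (-k - 1))) t) ∧
    HasDerivAt (fun t : ℝ => A * k * ((2 * a + 2 * t) * (p - 2 * a * t - t ^ 2) ^ (-k - 1)))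
      (A * k * (2 * p ^ (-k - 1) + 4 * (k + 1) * a ^ 2 * p ^ (-k - 2))) 0 := by
  have hq : ∀ t : ℝ, HasDerivAt (fun t : ℝ => p - 2 * a * t - t ^ 2) (-(2 * a + 2 * t)) t := by
    intro t
    have := (((hasDerivAt_id t).const_mul (2 * a)).const_sub p).sub ((hasDerivAt_id t).pow 2)
    refine this.congr_deriv ?_
    simp
    ring
  have hpos : ∀ᶠ t in nhds (0 : ℝ), 0 < p - 2 * a * t - t ^ 2 := by
    apply (hq 0).continuousAt.eventually (lt_mem_nhds _)
    simpa using hp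
  constructor
  · filter_upwards [hpos] with t ht
    refine ((hq t).rpow_const (p := -k) (Or.inl ht.ne')).const_mul A |>.congr_deriv ?_
    ring
  · have h0 := hpos.self_of_nhds
    have h1 := (hq 0).rpow_const (p := -k - 1) (Or.inl h0.ne')
    have h2 : HasDerivAt (fun t : ℝ => 2 * a + 2 * t) 2 0 := by
      simpa using ((hasDerivAt_id (0 : ℝ)).const_mul 2).const_add (2 * a)
    refine (h2.mul h1).const_mul (A * k) |>.congr_deriv ?_
    have e : -k - 1 - 1 = -k - 2 := by ring
    simp [e]
    ring_nf
    simp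

/-- The one-sided a priori bound, by comparison with the barrier `A ρ ^ (-2/ε)`. -/
lemma upper_bound {n : ℕ} (hn : 2 ≤ n) (x₀ : EuclideanSpace ℝ (Fin n)) {R : ℝ} (hR : 0 < R)
    {δ ε : ℝ} (hδ : 0 < δ) (hε : 0 < ε) :
    ∃ C : ℝ, 0 < C ∧ ∀ F : ℝ → ℝ, (∀ μ, 0 < μ → δ * μ ^ (1 + ε) ≤ F μ) →
      ∀ u : EuclideanSpace ℝ (Fin n) → ℝ,
        ContinuousOn u (closedBall x₀ R) → ContDiffOn ℝ 2 u (ball x₀ R) →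
        (∀ x ∈ ball x₀ R, lap u x = F (u x)) → u x₀ ≤ C := by
  set k : ℝ := 2 / ε with hk
  have hk0 : 0 < k := by positivity
  have hkε : k * ε = 2 := by rw [hk]; field_simp
  set K : ℝ := (2 * k * n + 4 * k * (k + 1)) * R ^ 2 with hK
  have hK0 : 0 < K := by positivity
  set A : ℝ := (K / δ) ^ (1 / ε) with hA
  have hA0 : 0 < A := by positivity
  have hAε : δ * A ^ ε = K := by
    rw [hA, ← Real.rpow_mul (by positivity)]
    rw [one_div_mul_cancel hε.ne', Real.rpow_one]
    field_simp
  refine ⟨A * (R ^ 2) ^ (-k), by positivity, ?_⟩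
  intro F hF u huc hud hpde
  by_contra! hlt
  -- `M` bounds `u`, and `η` is the level of `ρ` at which the barrier equals `M`.
  obtain ⟨M₀, hM₀⟩ := (isCompact_closedBall x₀ R).bddAbove_image huc
  set M := max M₀ 1
  have hM : ∀ x ∈ closedBall x₀ R, u x ≤ M := fun x hx =>
    (hM₀ (mem_image_of_mem u hx)).trans (le_max_left _ _)
  have hM0 : 0 < M := lt_of_lt_of_le one_pos (le_max_right _ _)
  set η : ℝ := (M / A) ^ (-1 / k) with hη
  have hη0 : 0 < η := by positivity
  have hηM : A * η ^ (-k) = M := by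
    rw [hη, ← Real.rpow_mul (by positivity)]
    have : -1 / k * -k = 1 := by field_simp
    rw [this, Real.rpow_one]
    field_simp
  have hx₀ : x₀ ∈ closedBall x₀ R := mem_closedBall_self hR.le
  have hηR : η < R ^ 2 := by
    by_contra! hle
    have h1 : η ^ (-k) ≤ (R ^ 2) ^ (-k) :=
      Real.rpow_le_rpow_of_nonpos (by positivity) hle (by linarith)
    have h2 := mul_le_mul_of_nonneg_left h1 hA0.le
    linarith [hM x₀ hx₀]
  set ρ : EuclideanSpace ℝ (Fin n) → ℝ := fun x => R ^ 2 - ‖x - x₀‖ ^ 2 with hρ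
  have hρc : Continuous ρ := by fun_prop
  have hball : ∀ x, 0 < ρ x → x ∈ ball x₀ R := by
    intro x hx
    rw [mem_ball, dist_eq_norm]
    exact lt_of_pow_lt_pow_left₀ 2 hR.le (by simp only [hρ] at hx; linarith)
  set S : Set (EuclideanSpace ℝ (Fin n)) := {x | η ≤ ρ x} with hS
  have hSb : S ⊆ closedBall x₀ R := fun x hx =>
    ball_subset_closedBall (hball x (hη0.trans_le hx))
  have hScpt : IsCompact S :=
    (isCompact_closedBall x₀ R).of_isClosed_subset (isClosed_le continuous_const hρc) hSb
  have hx₀S : x₀ ∈ S := by simp [hS, hρ, hηR.le]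
  have hcont : ContinuousOn (fun x => u x - A * ρ x ^ (-k)) S := by
    refine (huc.mono hSb).sub (continuousOn_const.mul (hρc.continuousOn.rpow_const ?_))
    intro x hx
    exact Or.inl (hη0.trans_le hx).ne'
  obtain ⟨x₁, hx₁S, hx₁⟩ := hScpt.exists_isMaxOn ⟨x₀, hx₀S⟩ hcont
  have hpos : A * ρ x₁ ^ (-k) < u x₁ := by
    have h1 := hx₁ hx₀S
    simp only [mem_ofPred_eq] at h1
    have h2 : ρ x₀ = R ^ 2 := by simp [hρ]
    rw [h2] at h1
    linarith
  -- At `ρ = η` the barrier is already at least `u`, so the maximum is interior.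
  have hint : η < ρ x₁ := by
    refine lt_of_le_of_ne hx₁S fun h => ?_
    rw [← h, hηM] at hpos
    linarith [hM x₁ (hSb hx₁S)]
  have hp : 0 < ρ x₁ := hη0.trans hint
  have hx₁b := hball x₁ hp
  have hloc : IsLocalMax (fun x => u x - A * ρ x ^ (-k)) x₁ :=
    hx₁.isLocalMax (Filter.mem_of_superset (hρc.continuousAt.eventually (lt_mem_nhds hint))
      fun x (hx : η < ρ x) => hx.le)
  have hu2 : ContDiffAt ℝ 2 u x₁ := hud.contDiffAt (isOpen_ball.mem_nhds hx₁b)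
  set y := x₁ - x₀ with hy
  have hdir : ∀ i : Fin n,
      fderiv ℝ (fun z => fderiv ℝ u z (EuclideanSpace.single i 1)) x₁ (EuclideanSpace.single i 1)
      ≤ A * k * (2 * ρ x₁ ^ (-k - 1) + 4 * (k + 1) * (y i) ^ 2 * ρ x₁ ^ (-k - 2)) := by
    intro i
    set e : EuclideanSpace ℝ (Fin n) := EuclideanSpace.single i 1 with he
    have hρt : ∀ t : ℝ, ρ (x₁ + t • e) = ρ x₁ - 2 * (y i) * t - t ^ 2 := by
      intro t
      have h1 : x₁ + t • e - x₀ = y + t • e := by rw [hy]; abel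
      have h2 : ‖y + t • e‖ ^ 2 = ‖y‖ ^ 2 + 2 * (t * y i) + t ^ 2 := by
        rw [norm_add_sq_real, norm_smul, inner_smul_right, he, EuclideanSpace.inner_single_right]
        simp
      simp only [hρ]
      rw [h1, h2]
      ring
    obtain ⟨hu1, hu2'⟩ := line_deriv (e := e) hu2
    obtain ⟨hw1, hw2⟩ := barrier_deriv (a := y i) (A := A) (k := k) hp
    have hmax : IsLocalMax (fun t : ℝ =>
        u (x₁ + t • e) - A * (ρ x₁ - 2 * (y i) * t - t ^ 2) ^ (-k)) 0 := by
      have ht : Filter.Tendsto (fun t : ℝ => x₁ + t • e) (nhds 0) (nhds x₁) := by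
        have : Continuous fun t : ℝ => x₁ + t • e := by fun_prop
        simpa using this.tendsto 0
      filter_upwards [ht.eventually hloc] with t h
      rw [hρt] at h
      simpa using h
    have := second_deriv_nonpos hmax
      (by filter_upwards [hu1, hw1] with t h1 h2 using h1.sub h2) (hu2'.sub hw2)
    linarith
  have hlap : lap u x₁ ≤
      A * k * (2 * n * ρ x₁ ^ (-k - 1) + 4 * (k + 1) * ‖y‖ ^ 2 * ρ x₁ ^ (-k - 2)) := by
    refine (Finset.sum_le_sum fun i _ => hdir i).trans (le_of_eq ?_)
    rw [← Finset.mul_sum, Finset.sum_add_distrib, ← Finset.sum_mul, ← Finset.sum_mul,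
      ← Finset.mul_sum, EuclideanSpace.real_norm_sq_eq]
    simp only [Finset.sum_const, Finset.card_univ, Fintype.card_fin, nsmul_eq_mul]
    ring
  have hyR : ‖y‖ ^ 2 = R ^ 2 - ρ x₁ := by simp [hρ, hy]
  have hsplit : ρ x₁ ^ (-k - 1) = ρ x₁ ^ (-k - 2) * ρ x₁ := by
    rw [← Real.rpow_add_one hp.ne']
    ring_nf
  have hq : 0 < ρ x₁ ^ (-k - 2) := by positivity
  have hbound : lap u x₁ ≤ A * K * ρ x₁ ^ (-k - 2) := by
    refine hlap.trans ?_
    have h1 : ‖y‖ ^ 2 ≤ R ^ 2 := by linarith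
    have h2 : ρ x₁ ≤ R ^ 2 := by linarith [sq_nonneg ‖y‖]
    rw [hsplit, hK]
    have : A * k * (2 * n * (ρ x₁ ^ (-k - 2) * ρ x₁) + 4 * (k + 1) * ‖y‖ ^ 2 * ρ x₁ ^ (-k - 2))
      ≤ A * k * (2 * n * (ρ x₁ ^ (-k - 2) * R ^ 2) + 4 * (k + 1) * R ^ 2 * ρ x₁ ^ (-k - 2)) := by
      gcongr
    refine this.trans (le_of_eq ?_)
    ring
  have hw0 : 0 < A * ρ x₁ ^ (-k) := by positivity
  have hstrict : δ * (A * ρ x₁ ^ (-k)) ^ (1 + ε) < lap u x₁ := by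
    rw [hpde x₁ hx₁b]
    refine lt_of_lt_of_le ?_ (hF _ (hw0.trans hpos))
    gcongr
  have hweq : δ * (A * ρ x₁ ^ (-k)) ^ (1 + ε) = A * K * ρ x₁ ^ (-k - 2) := by
    have e : -k * (1 + ε) = -k - 2 := by linear_combination -hkε
    rw [Real.mul_rpow hA0.le (by positivity), ← Real.rpow_mul hp.le, e, Real.rpow_add hA0,
      Real.rpow_one, ← hAε]
    ring
  linarith

lemma lap_neg {n : ℕ} (u : EuclideanSpace ℝ (Fin n) → ℝ) (x : EuclideanSpace ℝ (Fin n)) :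
    lap (fun y => -u y) x = -lap u x := by
  simp [lap, fderiv_fun_neg]

theorem stmt_1 (n : ℕ) (hn : 2 ≤ n) (x₀ : EuclideanSpace ℝ (Fin n)) (R : ℝ) (hR : 0 < R)
    (F : ℝ → ℝ) (δ ε : ℝ) (hδ : 0 < δ) (hε : 0 < ε)
    (hF : ContDiff ℝ 2 F) (hF0 : F 0 = 0)
    (hFmono : ∀ μ : ℝ, 0 ≤ deriv F μ)
    (hFgrow : ∀ μ : ℝ, δ * |μ| ^ (1 + ε) ≤ |F μ|) :
    ∃ C : ℝ, 0 < C ∧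
      ∀ u : EuclideanSpace ℝ (Fin n) → ℝ,
        ContinuousOn u (closedBall x₀ R) → ContDiffOn ℝ 2 u (ball x₀ R) →
        (∀ x ∈ ball x₀ R, -lap u x + F (u x) = 0) →
        |u x₀| ≤ C := by
  obtain ⟨C, hC, h⟩ := upper_bound hn x₀ hR hδ hε
  have hmono : Monotone F := monotone_of_deriv_nonneg (hF.differentiable (by simp)) hFmono
  refine ⟨C, hC, fun u huc hud hpde => abs_le.2 ⟨?_, ?_⟩⟩
  · have := h (fun μ => -F (-μ)) ?_ (fun x => -u x) huc.neg hud.neg ?_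
    · linarith
    · intro μ hμ
      have h1 := hFgrow (-μ)
      have h2 : F (-μ) ≤ 0 := hF0 ▸ hmono (by linarith : -μ ≤ 0)
      rwa [abs_neg, abs_of_pos hμ, abs_of_nonpos h2] at h1
    · intro x hx
      rw [lap_neg, neg_neg]
      linarith [hpde x hx]
  · refine h F ?_ u huc hud ?_
    · intro μ hμ
      have h1 := hFgrow μ
      have h2 : 0 ≤ F μ := hF0 ▸ hmono hμ.le
      rwa [abs_of_pos hμ, abs_of_nonneg h2] at h1
    · intro x hx
      linarith [hpde x hx]
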